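/- arXiv:2301.00199 — 2 statements merged into one kernel-verified Lean document; each statement's English description precedes it below -/
import Mathlib

section
/- Contraction commutes with action code composition: for action codes R from A to B and S from B to C, and every LTS M over A, the LTS α_{R*S}(M) has the same set of states, the same starting state, and the same transitions as α_S(α_R(M)); in particular α_{R*S}(M) ≅ α_S(α_R(M)). -/
/-!
A word `w` with `R(b₁)···R(bₙ) = w` splits a path of `M` labelled `w` into `n` consecutive paths
labelled `R(bᵢ)`, and conversely such paths concatenate. Hence, from a state of `α_R(M)`, the
paths of `α_R(M)` labelled `b₁···bₙ` are exactly the paths of `M` labelled by the flattened word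
(`steps_contraction_iff`). Taking `b₁···bₙ = S(c)`, the two LTSs are generated from the same
starting state by the same steps, so they have the same states and transitions. They are thus
equal, and the isomorphism is the identity. The only extra point is that states of `α_S(α_R(M))`
are states of `α_R(M)`, which holds because each transition of `α_R(M)` ends in one of its states.
-/

universe u v w

/-- A labeled transition system over label set `A` with state set `Q`. -/
structure LTS (Q : Type*) (A : Type*) where
  start : Q
  tr : Q → A → Q → Prop

section Defs

variable {Q Q₁ Q₂ A B C : Type*}

/-- `Steps M q w q'`: there is a path from `q` to `q'` whose labels spell `w`. -/
inductive Steps (M : LTS Q A) : Q → List A → Q → Prop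
  | nil (q : Q) : Steps M q [] q
  | cons {q q' q'' : Q} {a : A} {w : List A} :
      M.tr q a q' → Steps M q' w q'' → Steps M q (a :: w) q''

/-- The traces of an LTS. -/
def Traces (M : LTS Q A) : Set (List A) :=
  { w | ∃ q', Steps M M.start w q' }

/-- At most one `a`-successor of every state. -/
def Deterministic (M : LTS Q A) : Prop :=
  ∀ q a q' q'', M.tr q a q' → M.tr q a q'' → q' = q''

/-- `S` is a simulation from `M` to `N`. -/
def IsSimulation (M : LTS Q₁ A) (N : LTS Q₂ A) (S : Q₁ → Q₂ → Prop) : Prop :=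
  S M.start N.start ∧
    ∀ q₁ q₂ a q₁', S q₁ q₂ → M.tr q₁ a q₁' → ∃ q₂', N.tr q₂ a q₂' ∧ S q₁' q₂'

/-- `M ⊑ N`: there exists a simulation from `M` to `N`. -/
def Simulates (M : LTS Q₁ A) (N : LTS Q₂ A) : Prop :=
  ∃ S, IsSimulation M N S

def Reachable (M : LTS Q A) (q : Q) : Prop :=
  ∃ w, Steps M M.start w q

lemma reachable_start (M : LTS Q A) : Reachable M M.start :=
  ⟨[], Steps.nil M.start⟩

/-- Isomorphism of the reachable parts of two LTSs. -/
def Isomorphic (M : LTS Q₁ A) (N : LTS Q₂ A) : Prop :=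
  ∃ f : { q : Q₁ // Reachable M q } → { p : Q₂ // Reachable N p },
    Function.Bijective f ∧
    (f ⟨M.start, reachable_start M⟩).1 = N.start ∧
    ∀ (q q' : { q : Q₁ // Reachable M q }) (a : A),
      M.tr q.1 a q'.1 ↔ N.tr (f q).1 a (f q').1

/-- A leaf is a state without outgoing transitions. -/
def Leaf (M : LTS Q A) (q : Q) : Prop :=
  ¬ ∃ a q', M.tr q a q'

/-- A path from the start state to `q`, recording labels and visited states. -/
inductive PathTo (M : LTS Q A) : Q → List (A × Q) → Prop
  | nil : PathTo M M.start []
  | snoc {q q' : Q} {a : A} {p : List (A × Q)} :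
      PathTo M q p → M.tr q a q' → PathTo M q' (p ++ [(a, q')])

/-- Every state is reached from the start by a unique sequence of transitions. -/
def TreeShaped (M : LTS Q A) : Prop :=
  ∀ q : Q, ∃! p : List (A × Q), PathTo M q p

/-- Every state has a path to a leaf. -/
def Grounded (M : LTS Q A) : Prop :=
  ∀ q : Q, ∃ w q', Steps M q w q' ∧ Leaf M q'

/-- The partial map assigns only nonempty words. -/
def NonemptyValued (R : B → Option (List A)) : Prop :=
  ∀ b w, R b = some w → w ≠ []

/-- Prefix-freeness of a partial map into words. -/
def PrefixFree (R : B → Option (List A)) : Prop :=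
  ∀ b b' w w', R b = some w → R b' = some w' → w <+: w' → b = b'

/-- A map-based action code from `A` to `B`: a prefix-free partial map `B ⇀ A⁺`. -/
def IsActionCode (R : B → Option (List A)) : Prop :=
  NonemptyValued R ∧ PrefixFree R

/-- The states of the contraction `α_R(M)`, generated inductively. -/
inductive AlphaState (R : B → Option (List A)) (M : LTS Q A) : Q → Prop
  | start : AlphaState R M M.start
  | step {q q' : Q} {b : B} {w : List A} :
      AlphaState R M q → R b = some w → Steps M q w q' → AlphaState R M q'

/-- The contraction `α_R(M)`. -/
def contraction (R : B → Option (List A)) (M : LTS Q A) : LTS Q B where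
  start := M.start
  tr := fun q b q' => AlphaState R M q ∧ ∃ w, R b = some w ∧ Steps M q w q'

/-- The states of the refinement `ρ_R(M)`. -/
def RhoState (R : B → Option (List A)) (M : LTS Q B) (p : Q × List A) : Prop :=
  p.2 = [] ∨ ∃ b q' w, M.tr p.1 b q' ∧ R b = some w ∧ p.2 <+: w ∧ p.2 ≠ w

/-- The refinement `ρ_R(M)`. -/
def refinement (R : B → Option (List A)) (M : LTS Q B) : LTS (Q × List A) A where
  start := (M.start, [])
  tr := fun p a p' =>
    (p'.1 = p.1 ∧ p'.2 = p.2 ++ [a] ∧ RhoState R M p') ∨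
    (p'.2 = [] ∧ ∃ b, M.tr p.1 b p'.1 ∧ R b = some (p.2 ++ [a]))

/-- Internal nodes of the code tree: the empty word and strict prefixes of code words. -/
def NState (R : B → Option (List A)) (wa : List A) : Prop :=
  wa = [] ∨ ∃ b v, R b = some v ∧ wa <+: v ∧ wa ≠ v

/-- The concretization `γ_R(M)`, taken w.r.t. the identity relation on `A`;
the state `none` is the chaos state `χ`. -/
def concretization (R : B → Option (List A)) (M : LTS Q B) :
    LTS (Option (Q × List A)) A where
  start := some (M.start, [])
  tr := fun s a s' =>
    match s with
    | some (q, w) =>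
        (s' = some (q, w ++ [a]) ∧ NState R (w ++ [a])) ∨
        (∃ b q', M.tr q b q' ∧ R b = some (w ++ [a]) ∧ s' = some (q', [])) ∨
        (s' = none ∧ ¬ NState R (w ++ [a]) ∧ ∀ b, R b ≠ some (w ++ [a]))
    | none => s' = none

/-- Homomorphic extension of a code to words (defined iff defined on all letters). -/
def flattenCode (R : B → Option (List A)) : List B → Option (List A)
  | [] => some []
  | b :: bs => (R b).bind fun w => (flattenCode R bs).map fun ws => w ++ ws

/-- Kleisli composition `R * S` of map-based action codes. -/
def compCode (R : B → Option (List A)) (S : C → Option (List B)) :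
    C → Option (List A) :=
  fun c => (S c).bind (flattenCode R)

/-- Output determinism of a Mealy machine. -/
def OutputDeterministic {I O : Type*} (M : LTS Q (I × O)) : Prop :=
  ∀ q i o o' r r', M.tr q (i, o) r → M.tr q (i, o') r' → o = o' ∧ r = r'

/-- Determinate action codes over Mealy alphabets. -/
def Determinate {I O X Y : Type*} (R : X × Y → Option (List (I × O))) : Prop :=
  ∀ x y₁ y₂ w₁ w₂ u i₁ o₁ i₂ o₂,
    R (x, y₁) = some w₁ → R (x, y₂) = some w₂ →
    (u ++ [(i₁, o₁)]) <+: w₁ → (u ++ [(i₂, o₂)]) <+: w₂ → i₁ = i₂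

end Defs

section Lemmas

variable {Q A B C : Type*}

lemma steps_append_iff (M : LTS Q A) {q q' : Q} {v w : List A} :
    Steps M q (v ++ w) q' ↔ ∃ p, Steps M q v p ∧ Steps M p w q' := by
  induction v generalizing q with
  | nil =>
    refine ⟨fun h => ⟨q, .nil q, h⟩, ?_⟩
    rintro ⟨p, hp, h⟩
    cases hp
    exact h
  | cons a v ih =>
    constructor
    · rintro (_ | ⟨ht, hs⟩)
      obtain ⟨p, hv, hw⟩ := ih.1 hs
      exact ⟨p, .cons ht hv, hw⟩
    · rintro ⟨p, _ | ⟨ht, hv⟩, hw⟩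
      exact .cons ht (ih.2 ⟨p, hv, hw⟩)

lemma flattenCode_cons_eq_some {R : B → Option (List A)} {b : B} {bs : List B} {w : List A} :
    flattenCode R (b :: bs) = some w ↔
      ∃ u, R b = some u ∧ ∃ v, flattenCode R bs = some v ∧ u ++ v = w := by
  simp [flattenCode, Option.bind_eq_some_iff, Option.map_eq_some_iff]

lemma compCode_eq_some {R : B → Option (List A)} {S : C → Option (List B)} {c : C}
    {w : List A} :
    compCode R S c = some w ↔ ∃ bs, S c = some bs ∧ flattenCode R bs = some w := by
  simp [compCode, Option.bind_eq_some_iff]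

lemma AlphaState.steps {R : B → Option (List A)} {M : LTS Q A} {q q' : Q} {bs : List B}
    (hq : AlphaState R M q) (h : Steps (contraction R M) q bs q') : AlphaState R M q' := by
  induction h with
  | nil => exact hq
  | cons ht _ ih =>
    obtain ⟨_, w, hw, hs⟩ := ht
    exact ih (hq.step hw hs)

/-- Paths of `α_R(M)` are the paths of `M` labelled by the flattened word. The hypothesis on `q`
is needed because the encoded transitions of `α_R(M)` start only at states of `α_R(M)`. -/
lemma steps_contraction_iff {R : B → Option (List A)} {M : LTS Q A} {q q' : Q} {bs : List B}
    (hq : AlphaState R M q) :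
    Steps (contraction R M) q bs q' ↔
      ∃ w, flattenCode R bs = some w ∧ Steps M q w q' := by
  induction bs generalizing q with
  | nil =>
    constructor
    · rintro ⟨⟩
      exact ⟨[], rfl, .nil _⟩
    · rintro ⟨w, hw, hs⟩
      cases hw
      cases hs
      exact .nil _
  | cons b bs ih =>
    constructor
    · rintro (_ | ⟨⟨_, u, hu, hsu⟩, hs⟩)
      obtain ⟨v, hv, hsv⟩ := (ih (hq.step hu hsu)).1 hs
      exact ⟨u ++ v, flattenCode_cons_eq_some.2 ⟨u, hu, v, hv, rfl⟩,
        (steps_append_iff M).2 ⟨_, hsu, hsv⟩⟩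
    · rintro ⟨w, hw, hs⟩
      obtain ⟨u, hu, v, hv, rfl⟩ := flattenCode_cons_eq_some.1 hw
      obtain ⟨p, hsu, hsv⟩ := (steps_append_iff M).1 hs
      exact .cons ⟨hq, u, hu, hsu⟩ ((ih (hq.step hu hsu)).2 ⟨v, hv, hsv⟩)

lemma AlphaState.of_contraction {R : B → Option (List A)} {S : C → Option (List B)}
    {M : LTS Q A} {q : Q} (h : AlphaState S (contraction R M) q) : AlphaState R M q := by
  induction h with
  | start => exact .start
  | step _ _ hs ih => exact ih.steps hs

/-- From a state of `α_R(M)`, the composed code and the two-stage code allow the same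
`c`-steps. -/
lemma exists_steps_compCode_iff {R : B → Option (List A)} {S : C → Option (List B)}
    {M : LTS Q A} {q q' : Q} {c : C} (hq : AlphaState R M q) :
    (∃ w, compCode R S c = some w ∧ Steps M q w q') ↔
      ∃ bs, S c = some bs ∧ Steps (contraction R M) q bs q' := by
  simp only [compCode_eq_some, steps_contraction_iff hq]
  grind

lemma alphaState_compCode_iff {R : B → Option (List A)} {S : C → Option (List B)}
    {M : LTS Q A} {q : Q} :
    AlphaState (compCode R S) M q ↔ AlphaState S (contraction R M) q := by
  constructor
  · intro h
    induction h with
    | start => exact .start (M := contraction R M)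
    | step _ hw hs ih =>
      obtain ⟨bs, hbs, hs'⟩ := (exists_steps_compCode_iff ih.of_contraction).1 ⟨_, hw, hs⟩
      exact ih.step hbs hs'
  · intro h
    induction h with
    | start => exact .start
    | step hq hbs hs ih =>
      obtain ⟨w, hw, hs'⟩ := (exists_steps_compCode_iff hq.of_contraction).2 ⟨_, hbs, hs⟩
      exact ih.step hw hs'

lemma contraction_compCode_eq (R : B → Option (List A)) (S : C → Option (List B))
    (M : LTS Q A) :
    contraction (compCode R S) M = contraction S (contraction R M) := by
  have htr : (contraction (compCode R S) M).tr = (contraction S (contraction R M)).tr := by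
    funext q c q'
    refine propext ((and_congr_left' alphaState_compCode_iff).trans ?_)
    exact and_congr_right fun hq => exists_steps_compCode_iff hq.of_contraction
  exact congrArg (LTS.mk M.start) htr

lemma Isomorphic.refl (M : LTS Q A) : Isomorphic M M :=
  ⟨id, Function.bijective_id, rfl, fun _ _ _ => Iff.rfl⟩

end Lemmas

/-- contraction commutes with action code composition:
`α_{R*S}(M)` has the same states, the same starting state and the same
transitions as `α_S(α_R(M))`; in particular the two LTSs are isomorphic. -/
theorem contraction_comp {Q A B C : Type*} (R : B → Option (List A))
    (S : C → Option (List B)) (hR : IsActionCode R) (hS : IsActionCode S)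
    (M : LTS Q A) :
    (∀ q, AlphaState (compCode R S) M q ↔ AlphaState S (contraction R M) q) ∧
    (contraction (compCode R S) M).start = (contraction S (contraction R M)).start ∧
    (∀ q c q', (contraction (compCode R S) M).tr q c q' ↔
      (contraction S (contraction R M)).tr q c q') ∧
    Isomorphic (contraction (compCode R S) M) (contraction S (contraction R M)) := by
  refine ⟨fun q => alphaState_compCode_iff, rfl, fun q c q' => ?_, ?_⟩
  · rw [contraction_compCode_eq]
  · rw [contraction_compCode_eq]
    exact .refl _
end

section
/- Refinement commutes with action code composition: for action codes R from A to B and S from B to C such that every word in the image of S consists only of letters in dom(R), and for every LTS M over C, it holds that ρ_{R*S}(M) ≅ ρ_R(ρ_S(M)). -/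
/-!
A state `((q, u), v)` of `ρ_R(ρ_S(M))` corresponds to the state `(q, R(u) v)` of `ρ_{R*S}(M)`,
where `R(u)` is the homomorphic image of the word `u`. Since `R` is prefix-free, a word over `A` has
at most one factorization `R(u) v` with `v` an internal node of the code tree of `R`
(`factorization_unique`), so the correspondence `FactorRel` is one-to-one. It is also a bisimulation:
whenever `R(u) v` is a strict prefix of `R(ws)`, the word `ws` extends `u` by a letter `b` with `v` a
strict prefix of `R(b)` (`factorization_lift`), so that a step in either system completes `R(b)`
or not, and completes `ws` or not, simultaneously in both.
A one-to-one bisimulation relating the starting states restricts to an isomorphism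
of the reachable parts (`isomorphic_of_biunique_bisim`).
-/


universe u v w

section CompHelpers

variable {Q Q₁ Q₂ A B C : Type*}

/-! ### Isomorphisms from one-to-one bisimulations -/

lemma Steps.snoc {M : LTS Q A} {q q' q'' : Q} {a : A} {w : List A}
    (h : Steps M q w q') (h' : M.tr q' a q'') : Steps M q (w ++ [a]) q'' := by
  induction h with
  | nil q => exact Steps.cons h' (Steps.nil _)
  | cons h1 _ ih => exact Steps.cons h1 (ih h')

lemma Reachable.step {M : LTS Q A} {q q' : Q} {a : A}
    (h : Reachable M q) (h' : M.tr q a q') : Reachable M q' := by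
  obtain ⟨w, hw⟩ := h
  exact ⟨w ++ [a], hw.snoc h'⟩

lemma sim_steps {M : LTS Q₁ A} {N : LTS Q₂ A} {T : Q₁ → Q₂ → Prop}
    (forth : ∀ p s a p', T p s → M.tr p a p' → ∃ s', N.tr s a s' ∧ T p' s')
    {p p' : Q₁} {w : List A} (h : Steps M p w p') :
    ∀ s, T p s → Reachable N s → ∃ s', Reachable N s' ∧ T p' s' := by
  induction h with
  | nil q => exact fun s hs hr => ⟨s, hr, hs⟩
  | cons h1 _ ih =>
    intro s hs hr
    obtain ⟨s', ht, hs'⟩ := forth _ _ _ _ hs h1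
    exact ih s' hs' (hr.step ht)

lemma isomorphic_of_biunique_bisim {M : LTS Q₁ A} {N : LTS Q₂ A} (T : Q₁ → Q₂ → Prop)
    (hstart : T M.start N.start)
    (forth : ∀ p s a p', T p s → M.tr p a p' → ∃ s', N.tr s a s' ∧ T p' s')
    (back : ∀ p s a s', T p s → N.tr s a s' → ∃ p', M.tr p a p' ∧ T p' s')
    (right_unique : ∀ p s s', T p s → T p s' → s = s')
    (left_unique : ∀ p p' s, T p s → T p' s → p = p') :
    Isomorphic M N := by
  have hex : ∀ p : {p // Reachable M p}, ∃ s : {s // Reachable N s}, T p.1 s.1 := by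
    rintro ⟨p, w, hw⟩
    obtain ⟨s, hs, hT⟩ := sim_steps forth hw N.start hstart (reachable_start N)
    exact ⟨⟨s, hs⟩, hT⟩
  choose f hf using hex
  refine ⟨f, ⟨?_, ?_⟩, ?_, ?_⟩
  · intro p p' h
    have h' := hf p'
    rw [← h] at h'
    exact Subtype.ext (left_unique _ _ _ (hf p) h')
  · rintro ⟨s, w, hw⟩
    obtain ⟨p, hp, hT⟩ := sim_steps (T := fun s p => T p s)
      (fun s p a s' hT ht => back p s a s' hT ht) hw M.start hstart (reachable_start M)
    exact ⟨⟨p, hp⟩, Subtype.ext (right_unique _ _ _ (hf ⟨p, hp⟩) hT)⟩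
  · exact right_unique _ _ _ (hf _) hstart
  · intro p p' a
    constructor
    · intro h
      obtain ⟨s', ht, hT⟩ := forth _ _ _ _ (hf p) h
      rwa [right_unique _ _ _ (hf p') hT]
    · intro h
      obtain ⟨p'', ht, hT⟩ := back _ _ _ _ (hf p) h
      rwa [left_unique _ _ _ (hf p') hT]

/-! ### Factorization of words along a prefix-free code -/

lemma flattenCode_cons_eq {R : B → Option (List A)} {b : B} {u : List B} {x : List A}
    (h : flattenCode R (b :: u) = some x) :
    ∃ y z, R b = some y ∧ flattenCode R u = some z ∧ x = y ++ z := by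
  simp only [flattenCode, Option.bind_eq_some_iff, Option.map_eq_some_iff] at h
  obtain ⟨y, hy, z, hz, rfl⟩ := h
  exact ⟨y, z, hy, hz, rfl⟩

lemma flattenCode_cons {R : B → Option (List A)} {b : B} {u : List B} {y z : List A}
    (hy : R b = some y) (hz : flattenCode R u = some z) :
    flattenCode R (b :: u) = some (y ++ z) := by
  simp [flattenCode, hy, hz]

lemma flattenCode_append {R : B → Option (List A)} {u t : List B} {x z : List A}
    (hx : flattenCode R u = some x) (hz : flattenCode R t = some z) :
    flattenCode R (u ++ t) = some (x ++ z) := by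
  induction u generalizing x with
  | nil =>
    simp only [flattenCode, Option.some.injEq] at hx
    subst hx
    simpa using hz
  | cons b u ih =>
    obtain ⟨y, x', hy, hx', rfl⟩ := flattenCode_cons_eq hx
    simpa using flattenCode_cons hy (ih hx')

lemma flattenCode_defined {R : B → Option (List A)} {u : List B}
    (h : ∀ b ∈ u, ∃ w, R b = some w) : ∃ x, flattenCode R u = some x := by
  induction u with
  | nil => exact ⟨[], rfl⟩
  | cons b u ih =>
    obtain ⟨y, hy⟩ := h b (by simp)
    obtain ⟨z, hz⟩ := ih fun b' hb' => h b' (by simp [hb'])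
    exact ⟨_, flattenCode_cons hy hz⟩

lemma flattenCode_eq_nil {R : B → Option (List A)} (hR : IsActionCode R) {t : List B}
    (h : flattenCode R t = some []) : t = [] := by
  cases t with
  | nil => rfl
  | cons b t =>
    obtain ⟨y, z, hy, _, hyz⟩ := flattenCode_cons_eq h
    exact absurd (List.append_eq_nil_iff.1 hyz.symm).1 (hR.1 _ _ hy)

/-- An internal node of the code tree has no code word as a prefix. -/
lemma NState.not_prefix {R : B → Option (List A)} (hR : IsActionCode R) {v y : List A} {b : B}
    (hv : NState R v) (hy : R b = some y) : ¬ y <+: v := by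
  intro hp
  rcases hv with rfl | ⟨b', y', hy', hv, hne⟩
  · exact hR.1 _ _ hy (List.prefix_nil.1 hp)
  · obtain rfl := hR.2 _ _ _ _ hy hy' (hp.trans hv)
    obtain rfl : y = y' := Option.some.inj (hy.symm.trans hy')
    exact hne (hv.eq_of_length_le hp.length_le)

lemma code_eq_of_append_eq {R : B → Option (List A)} (hR : IsActionCode R) {b b' : B}
    {y y' z z' : List A} (hy : R b = some y) (hy' : R b' = some y') (h : y ++ z = y' ++ z') :
    b = b' ∧ z = z' := by
  have hb : b = b' := by
    rcases List.prefix_or_prefix_of_prefix (List.prefix_append y z)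
      (h ▸ List.prefix_append y' z') with hp | hp
    · exact hR.2 _ _ _ _ hy hy' hp
    · exact (hR.2 _ _ _ _ hy' hy hp).symm
  subst hb
  obtain rfl : y = y' := Option.some.inj (hy.symm.trans hy')
  exact ⟨rfl, List.append_cancel_left h⟩

lemma factorization_unique {R : B → Option (List A)} (hR : IsActionCode R)
    {u u' : List B} {x x' v v' : List A}
    (hx : flattenCode R u = some x) (hx' : flattenCode R u' = some x')
    (hv : NState R v) (hv' : NState R v') (h : x ++ v = x' ++ v') : u = u' ∧ v = v' := by
  induction u generalizing u' x x' with
  | nil =>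
    simp only [flattenCode, Option.some.injEq] at hx
    subst hx
    cases u' with
    | nil =>
      simp only [flattenCode, Option.some.injEq] at hx'
      subst hx'
      exact ⟨rfl, by simpa using h⟩
    | cons b t =>
      obtain ⟨y, z, hy, _, rfl⟩ := flattenCode_cons_eq hx'
      exact absurd ⟨z ++ v', by simpa using h.symm⟩ (hv.not_prefix hR hy)
  | cons b u ih =>
    obtain ⟨y, z, hy, hz, rfl⟩ := flattenCode_cons_eq hx
    cases u' with
    | nil =>
      simp only [flattenCode, Option.some.injEq] at hx'
      subst hx'
      exact absurd ⟨z ++ v, by simpa using h⟩ (hv'.not_prefix hR hy)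
    | cons b' u' =>
      obtain ⟨y', z', hy', hz', rfl⟩ := flattenCode_cons_eq hx'
      obtain ⟨rfl, h2⟩ := code_eq_of_append_eq hR hy hy'
        (z := z ++ v) (z' := z' ++ v') (by simpa using h)
      obtain ⟨rfl, rfl⟩ := ih hz hz' h2
      exact ⟨rfl, rfl⟩

/-- If `R(u) v` is followed by a letter `a` inside `R(ws)`, with `v` an internal node of the code
tree, then `ws` continues `u` with a letter `b` whose code word starts with `v a`. -/
lemma factorization_lift {R : B → Option (List A)} (hR : IsActionCode R)
    {u ws : List B} {x v r : List A} {a : A}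
    (hx : flattenCode R u = some x) (hv : NState R v)
    (hw : flattenCode R ws = some (x ++ v ++ a :: r)) :
    ∃ b t r' z, ws = u ++ b :: t ∧ R b = some (v ++ a :: r') ∧ flattenCode R t = some z ∧
      r = r' ++ z := by
  induction u generalizing ws x with
  | nil =>
    simp only [flattenCode, Option.some.injEq] at hx
    subst hx
    cases ws with
    | nil => simp [flattenCode] at hw
    | cons b t =>
      obtain ⟨y, z, hy, hz, h⟩ := flattenCode_cons_eq hw
      simp only [List.nil_append] at h
      rcases List.append_eq_append_iff.1 h with ⟨s, rfl, h2⟩ | ⟨s, h1, _⟩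
      · cases s with
        | nil => exact absurd (by simp) (hv.not_prefix hR hy)
        | cons a' r' =>
          simp only [List.cons_append, List.cons.injEq] at h2
          obtain ⟨rfl, rfl⟩ := h2
          exact ⟨b, t, r', z, rfl, hy, hz, rfl⟩
      · exact absurd ⟨s, h1.symm⟩ (hv.not_prefix hR hy)
  | cons b u ih =>
    obtain ⟨y, x', hy, hx', rfl⟩ := flattenCode_cons_eq hx
    cases ws with
    | nil => simp [flattenCode] at hw
    | cons b' ws =>
      obtain ⟨y', z', hy', hz', h⟩ := flattenCode_cons_eq hw
      obtain ⟨rfl, h2⟩ := code_eq_of_append_eq hR hy hy'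
        (z := x' ++ v ++ a :: r) (z' := z') (by simpa using h)
      subst h2
      obtain ⟨b1, t, r', z, rfl, h3⟩ := ih hx' hz'
      exact ⟨b1, t, r', z, rfl, h3⟩

/-! ### Transitions of refinements -/

/-- A word `w a` is a nonempty state word of `q` in the refinement iff it can be properly extended
to the code word of an outgoing label of `q`. -/
lemma rhoState_snoc_iff {R : B → Option (List A)} {M : LTS Q B} {q : Q} {w : List A} {a : A} :
    RhoState R M (q, w ++ [a]) ↔
      ∃ b q' a' r, M.tr q b q' ∧ R b = some (w ++ a :: a' :: r) := by
  constructor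
  · rintro (h | ⟨b, q', y, ht, hy, ⟨s, hs⟩, hne⟩)
    · simp at h
    · cases s with
      | nil => exact absurd (by simpa using hs) hne
      | cons a' r => exact ⟨b, q', a', r, ht, by rw [hy, ← hs]; simp⟩
  · rintro ⟨b, q', a', r, ht, hy⟩
    exact Or.inr ⟨b, q', _, ht, hy, ⟨a' :: r, by simp⟩, by simp⟩

lemma refinement_enabled {S : C → Option (List B)} {M : LTS Q C} {q q' : Q} {c : C}
    {u t : List B} {b : B} (ht : M.tr q c q') (hS : S c = some (u ++ b :: t)) :
    ∃ s, (refinement S M).tr (q, u) b s := by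
  cases t with
  | nil => exact ⟨(q', []), Or.inr ⟨rfl, c, ht, hS⟩⟩
  | cons b' t =>
    exact ⟨(q, u ++ [b]), Or.inl ⟨rfl, rfl, rhoState_snoc_iff.2 ⟨c, q', b', t, ht, hS⟩⟩⟩

lemma exists_of_refinement_tr {S : C → Option (List B)} {M : LTS Q C} {q : Q} {u : List B} {b : B}
    {s : Q × List B} (h : (refinement S M).tr (q, u) b s) :
    ∃ c q' t, M.tr q c q' ∧ S c = some (u ++ b :: t) := by
  rcases h with ⟨h1, h2, h3⟩ | ⟨_, c, ht, hS⟩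
  · obtain ⟨q1, u1⟩ := s
    dsimp only at h1 h2
    subst h1 h2
    obtain ⟨c, q', b', t, ht, hS⟩ := rhoState_snoc_iff.1 h3
    exact ⟨c, q', _, ht, hS⟩
  · exact ⟨c, _, [], ht, hS⟩

/-! ### The correspondence of states -/

/-- The correspondence between states `(q, R(u) v)` of `ρ_{R*S}(M)` and states `((q, u), v)` of
`ρ_R(ρ_S(M))`, where `v` is an internal node of the code tree of `R`. -/
def FactorRel (R : B → Option (List A)) (p : Q × List A) (s : (Q × List B) × List A) : Prop :=
  p.1 = s.1.1 ∧ ∃ x, flattenCode R s.1.2 = some x ∧ p.2 = x ++ s.2 ∧ NState R s.2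

lemma factorRel_forth {R : B → Option (List A)} {S : C → Option (List B)} (hR : IsActionCode R)
    {M : LTS Q C} (p : Q × List A) (s : (Q × List B) × List A) (a : A) (p' : Q × List A)
    (h : FactorRel R p s) (ht : (refinement (compCode R S) M).tr p a p') :
    ∃ s', (refinement R (refinement S M)).tr s a s' ∧ FactorRel R p' s' := by
  obtain ⟨q, w⟩ := p
  obtain ⟨⟨q1, u⟩, v⟩ := s
  obtain ⟨q', w'⟩ := p'
  obtain ⟨h1, x, hx, h2, hv⟩ := h
  dsimp only at h1 hx h2 hv
  subst h1 h2
  rcases ht with ⟨h1, h2, h3⟩ | ⟨h1, c, ht, hc⟩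
  · dsimp only at h1 h2
    subst h1 h2
    obtain ⟨c, q'', a', r, hM, hc⟩ := rhoState_snoc_iff.1 h3
    obtain ⟨ws, hws, hfl⟩ := Option.bind_eq_some_iff.1 hc
    obtain ⟨b, t, r', z, rfl, hb, hz, hr⟩ := factorization_lift hR hx hv hfl
    cases r' with
    | nil =>
      -- `v a` is the whole code word of `b`, and `b` is not the last letter of the `S`-word.
      cases t with
      | nil =>
        simp only [flattenCode, Option.some.injEq] at hz
        subst hz
        simp at hr
      | cons b' t =>
        refine ⟨((q', u ++ [b]), []), Or.inr ⟨rfl, b, Or.inl ⟨rfl, rfl, ?_⟩, hb⟩, rfl,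
          x ++ (v ++ [a]), ?_, by simp, Or.inl rfl⟩
        · exact rhoState_snoc_iff.2 ⟨c, q'', b', t, hM, hws⟩
        · exact flattenCode_append hx (by simp [flattenCode, hb])
    | cons a'' r'' =>
      obtain ⟨s, hs⟩ := refinement_enabled hM hws
      refine ⟨((q', u), v ++ [a]), Or.inl ⟨rfl, rfl, ?_⟩, rfl, x, hx, by simp, ?_⟩
      · exact rhoState_snoc_iff.2 ⟨b, s, a'', r'', hs, hb⟩
      · exact Or.inr ⟨b, _, hb, ⟨a'' :: r'', by simp⟩, by simp⟩
  · dsimp only at h1 ht hc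
    subst h1
    obtain ⟨ws, hws, hfl⟩ := Option.bind_eq_some_iff.1 hc
    obtain ⟨b, t, r', z, rfl, hb, hz, hr⟩ := factorization_lift hR hx hv hfl
    obtain ⟨rfl, rfl⟩ := List.append_eq_nil_iff.1 hr.symm
    obtain rfl := flattenCode_eq_nil hR hz
    exact ⟨((q', []), []), Or.inr ⟨rfl, b, Or.inr ⟨rfl, c, ht, hws⟩, hb⟩, rfl, [], rfl, rfl,
      Or.inl rfl⟩

lemma factorRel_back {R : B → Option (List A)} {S : C → Option (List B)} (hR : IsActionCode R)
    {M : LTS Q C} (him : ∀ c ws, S c = some ws → ∀ b ∈ ws, ∃ w, R b = some w)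
    (p : Q × List A) (s : (Q × List B) × List A) (a : A) (s' : (Q × List B) × List A)
    (h : FactorRel R p s) (ht : (refinement R (refinement S M)).tr s a s') :
    ∃ p', (refinement (compCode R S) M).tr p a p' ∧ FactorRel R p' s' := by
  obtain ⟨q, w⟩ := p
  obtain ⟨⟨q1, u⟩, v⟩ := s
  obtain ⟨⟨q', u'⟩, v'⟩ := s'
  obtain ⟨h1, x, hx, h2, hv⟩ := h
  dsimp only at h1 hx h2 hv
  subst h1 h2
  have comp_eq : ∀ {c b t y}, S c = some (u ++ b :: t) → R b = some y →
      ∃ z, flattenCode R t = some z ∧ compCode R S c = some (x ++ (y ++ z)) := by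
    intro c b t y hc hb
    obtain ⟨z, hz⟩ := flattenCode_defined (u := t) fun b' hb' => him c _ hc b' (by simp [hb'])
    refine ⟨z, hz, ?_⟩
    rw [compCode, hc]
    exact flattenCode_append hx (flattenCode_cons hb hz)
  rcases ht with ⟨h1, h2, h3⟩ | ⟨h1, b, ht, hb⟩
  · simp only [Prod.mk.injEq] at h1 h2
    obtain ⟨rfl, rfl⟩ := h1
    subst h2
    obtain ⟨b, s, a', r, hs, hb⟩ := rhoState_snoc_iff.1 h3
    obtain ⟨c, q'', t, hM, hc⟩ := exists_of_refinement_tr hs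
    obtain ⟨z, _, hcomp⟩ := comp_eq hc hb
    refine ⟨(q', x ++ v ++ [a]), Or.inl ⟨rfl, rfl, ?_⟩, rfl, x, hx, by simp, ?_⟩
    · exact rhoState_snoc_iff.2 ⟨c, q'', a', r ++ z, hM, by simpa using hcomp⟩
    · exact Or.inr ⟨b, _, hb, ⟨a' :: r, by simp⟩, by simp⟩
  · dsimp only at h1 ht hb
    subst h1
    rcases ht with ⟨h1, h2, h3⟩ | ⟨h1, c, hM, hc⟩
    · dsimp only at h1 h2
      subst h1 h2
      obtain ⟨c, q'', b', t, hM, hc⟩ := rhoState_snoc_iff.1 h3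
      obtain ⟨z, hz, hcomp⟩ := comp_eq hc hb
      cases z with
      | nil => exact absurd (flattenCode_eq_nil hR hz) (by simp)
      | cons a' r =>
        refine ⟨(q', x ++ v ++ [a]), Or.inl ⟨rfl, rfl, ?_⟩, rfl, x ++ (v ++ [a]), ?_, by simp,
          Or.inl rfl⟩
        · exact rhoState_snoc_iff.2 ⟨c, q'', a', r, hM, by simpa using hcomp⟩
        · exact flattenCode_append hx (by simp [flattenCode, hb])
    · dsimp only at h1 hM hc
      subst h1
      obtain ⟨z, hz, hcomp⟩ := comp_eq hc hb
      simp only [flattenCode, Option.some.injEq] at hz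
      subst hz
      exact ⟨(q', []), Or.inr ⟨rfl, c, hM, by simpa using hcomp⟩, rfl, [], rfl, rfl, Or.inl rfl⟩

end CompHelpers

/-- refinement commutes with action code composition, provided every
word in the image of `S` only uses letters in `dom(R)`. -/
theorem refinement_comp {Q A B C : Type*} (R : B → Option (List A))
    (S : C → Option (List B)) (hR : IsActionCode R) (hS : IsActionCode S)
    (M : LTS Q C)
    (him : ∀ c ws, S c = some ws → ∀ b ∈ ws, ∃ w, R b = some w) :
    Isomorphic (refinement (compCode R S) M) (refinement R (refinement S M)) := by
  refine isomorphic_of_biunique_bisim (FactorRel R) ⟨rfl, [], rfl, rfl, Or.inl rfl⟩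
    (factorRel_forth hR) (factorRel_back hR him) ?_ ?_
  · rintro ⟨q, w⟩ ⟨⟨q1, u1⟩, v1⟩ ⟨⟨q2, u2⟩, v2⟩ ⟨h1, x, hx, hw, hv⟩ ⟨h1', x', hx', hw', hv'⟩
    obtain ⟨h2, h3⟩ := factorization_unique hR hx hx' hv hv' (hw.symm.trans hw')
    dsimp only at h1 h1' h2 h3
    subst h1 h1' h2 h3
    rfl
  · rintro ⟨q, w⟩ ⟨q', w'⟩ ⟨⟨q1, u1⟩, v1⟩ ⟨h1, x, hx, hw, _⟩ ⟨h1', x', hx', hw', _⟩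
    obtain rfl : x = x' := Option.some.inj (hx.symm.trans hx')
    exact Prod.ext (h1.trans h1'.symm) (hw.trans hw'.symm)
end
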